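/- arXiv:1103.4296 — 2 statements merged into one kernel-verified Lean document; each statement's English description precedes it below -/
import Mathlib

section
/- Let f : ℝ^d → ℝ be convex and L-Lipschitz with respect to the ℓ2-norm, and let f_μ(x) = E[f(x + Z)] where Z ~ N(0, u² I). Then f_μ is differentiable with gradient that is (L/u)-Lipschitz continuous with respect to the ℓ2-norm: ‖∇f_μ(x) − ∇f_μ(y)‖₂ ≤ (L/u)‖x − y‖₂ for all x, y. -/
/-!
Write `G` for the density of `N(0, u² I)`. After a change of variables
`f_μ(x) = ∫ G(w - x) f(w) dw`, so the dependence on `x` sits in the smooth kernel only.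
Since `f` grows at most linearly, differentiation under the integral sign is justified by Gaussian
domination (`hasFDerivAt_smoothing`) and yields
`⟪∇f_μ(x), v⟫ = u⁻² ∫ f(x + z) ⟪z, v⟫ G(z) dz` (`fderiv_smoothing_apply`). Hence
`|⟪∇f_μ(x) - ∇f_μ(y), v⟫| ≤ u⁻² L ‖x - y‖ ∫ |⟪z, v⟫| G(z) dz`, and the first absolute moment is at
most `u ‖v‖` (`integral_abs_inner_le`). The latter follows from the second moment
`∫ ⟪z, v⟫² G(z) dz = u² ‖v‖²`, obtained by integrating by parts (`integral_inner_sq`).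
-/

namespace GaussianSmoothing

open MeasureTheory Real

variable {d : ℕ}

/-! ### The Gaussian density and its integrability -/

/-- The density of the Gaussian law `N(0, u² I)` on `ℝ^d` with respect to Lebesgue measure. -/
noncomputable def density (u : ℝ) (z : EuclideanSpace ℝ (Fin d)) : ℝ :=
  (2 * π * u ^ 2) ^ (-(d : ℝ) / 2) * Real.exp (-‖z‖ ^ 2 / (2 * u ^ 2))

lemma density_nonneg (u : ℝ) (z : EuclideanSpace ℝ (Fin d)) : 0 ≤ density u z := by
  unfold density; positivity

lemma continuous_density (u : ℝ) :
    Continuous (density u : EuclideanSpace ℝ (Fin d) → ℝ) := by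
  unfold density; fun_prop

lemma integrable_exp_neg_mul_sq {b : ℝ} (hb : 0 < b) :
    Integrable (fun z : EuclideanSpace ℝ (Fin d) => Real.exp (-b * ‖z‖ ^ 2)) := by
  have h := (GaussianFourier.integrable_cexp_neg_mul_sq_norm_add
    (V := EuclideanSpace ℝ (Fin d)) (b := (b : ℂ)) (by simpa using hb) 0 0).norm
  refine h.congr (Filter.Eventually.of_forall fun z => ?_)
  simp [Complex.norm_exp, ← Complex.ofReal_pow]

lemma integral_density {u : ℝ} (hu : 0 < u) :
    ∫ z : EuclideanSpace ℝ (Fin d), density u z = 1 := by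
  have h := GaussianFourier.integral_rexp_neg_mul_sq_norm (V := EuclideanSpace ℝ (Fin d))
    (b := 1 / (2 * u ^ 2)) (by positivity)
  have h' : ∀ z : EuclideanSpace ℝ (Fin d), density u z =
      (2 * π * u ^ 2) ^ (-(d : ℝ) / 2) * Real.exp (-(1 / (2 * u ^ 2)) * ‖z‖ ^ 2) := by
    intro z; unfold density; congr 2; ring
  simp_rw [h']
  rw [integral_const_mul, h, finrank_euclideanSpace_fin,
    show π / (1 / (2 * u ^ 2)) = 2 * π * u ^ 2 by field_simp,
    ← Real.rpow_add (by positivity)]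
  ring_nf
  simp

lemma one_add_sq_mul_exp_le {b : ℝ} (hb : 0 < b) (t : ℝ) :
    (1 + t) ^ 2 * Real.exp (-b * t ^ 2) ≤ (2 + 4 / b) * Real.exp (-(b / 2) * t ^ 2) := by
  have h1 : b / 2 * t ^ 2 + 1 ≤ Real.exp (b / 2 * t ^ 2) := Real.add_one_le_exp _
  have h2 : 0 ≤ b / 2 * t ^ 2 := by positivity
  have h3 : (1 + t) ^ 2 ≤ (2 + 4 / b) * Real.exp (b / 2 * t ^ 2) := by
    have h4 : (2 + 4 / b) * (b / 2 * t ^ 2 + 1) ≤ (2 + 4 / b) * Real.exp (b / 2 * t ^ 2) := by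
      gcongr
    have h5 : (2 + 4 / b) * (b / 2 * t ^ 2 + 1) = b * t ^ 2 + 2 + 2 * t ^ 2 + 4 / b := by
      field_simp; ring
    have h6 : 0 < 4 / b := by positivity
    nlinarith [sq_nonneg (1 - t)]
  calc (1 + t) ^ 2 * Real.exp (-b * t ^ 2)
      ≤ (2 + 4 / b) * Real.exp (b / 2 * t ^ 2) * Real.exp (-b * t ^ 2) := by gcongr
    _ = (2 + 4 / b) * Real.exp (-(b / 2) * t ^ 2) := by
      rw [mul_assoc, ← Real.exp_add]; ring_nf

lemma integrable_one_add_sq_mul_exp {b : ℝ} (hb : 0 < b) :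
    Integrable (fun z : EuclideanSpace ℝ (Fin d) =>
      (1 + ‖z‖) ^ 2 * Real.exp (-b * ‖z‖ ^ 2)) := by
  refine ((integrable_exp_neg_mul_sq (half_pos hb)).const_mul (2 + 4 / b)).mono'
    (by fun_prop) (Filter.Eventually.of_forall fun z => ?_)
  rw [Real.norm_of_nonneg (by positivity)]
  exact one_add_sq_mul_exp_le hb _

/-- Continuous functions of at most quadratic growth are integrable against the Gaussian. -/
lemma integrable_mul_density {u : ℝ} (hu : 0 < u) {h : EuclideanSpace ℝ (Fin d) → ℝ}
    (hc : Continuous h) (M : ℝ) (hM : ∀ z, |h z| ≤ M * (1 + ‖z‖) ^ 2) :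
    Integrable (fun z => h z * density u z) := by
  refine ((integrable_one_add_sq_mul_exp (b := 1 / (2 * u ^ 2)) (by positivity)).const_mul
    (M * (2 * π * u ^ 2) ^ (-(d : ℝ) / 2))).mono'
    (hc.mul (continuous_density u)).aestronglyMeasurable (Filter.Eventually.of_forall fun z => ?_)
  rw [Real.norm_eq_abs, abs_mul, abs_of_nonneg (density_nonneg u z)]
  calc |h z| * density u z ≤ M * (1 + ‖z‖) ^ 2 * density u z :=
        mul_le_mul_of_nonneg_right (hM z) (density_nonneg u z)
    _ = _ := by
        unfold density
        rw [show -‖z‖ ^ 2 / (2 * u ^ 2) = -(1 / (2 * u ^ 2)) * ‖z‖ ^ 2 by ring]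
        ring

/-! ### Directional moments of the Gaussian -/

lemma hasFDerivAt_density (u : ℝ) (z : EuclideanSpace ℝ (Fin d)) :
    HasFDerivAt (density u) (-(density u z / u ^ 2) • innerSL ℝ z) z := by
  have h1 := (hasStrictFDerivAt_norm_sq z).hasFDerivAt
  have h2 := ((h1.mul_const (-(1 / (2 * u ^ 2)))).exp).const_mul
    ((2 * π * u ^ 2) ^ (-(d : ℝ) / 2))
  have e : ∀ z : EuclideanSpace ℝ (Fin d), ‖z‖ ^ 2 * -(1 / (2 * u ^ 2)) =
      -‖z‖ ^ 2 / (2 * u ^ 2) := fun z => by ring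
  simp only [e] at h2
  refine h2.congr_fderiv ?_
  ext v
  simp [density]
  by_cases hu : u = 0
  · simp [hu]
  · field_simp

lemma abs_inner_le (z v : EuclideanSpace ℝ (Fin d)) :
    |inner ℝ z v| ≤ ‖v‖ * (1 + ‖z‖) := by
  have := abs_real_inner_le_norm z v
  nlinarith [norm_nonneg v]

/-- The second moment of `N(0, u² I)` in direction `v`. With `∂ᵥG(z) = -u⁻² ⟪z, v⟫ G(z)`, this is
integration by parts of `⟪z, v⟫ ∂ᵥG(z)` together with `∫ G = 1`. -/
lemma integral_inner_sq {u : ℝ} (hu : 0 < u) (v : EuclideanSpace ℝ (Fin d)) :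
    ∫ z, (inner ℝ z v) ^ 2 * density u z = u ^ 2 * ‖v‖ ^ 2 := by
  have hF : ∀ z : EuclideanSpace ℝ (Fin d),
      HasFDerivAt (fun z => inner ℝ z v) (innerSL ℝ v) z := by
    intro z
    have := (innerSL ℝ v).hasFDerivAt (x := z)
    simpa [real_inner_comm] using this
  have hc : Continuous fun z : EuclideanSpace ℝ (Fin d) => inner ℝ z v := by fun_prop
  have i0 : Integrable (fun z : EuclideanSpace ℝ (Fin d) => ‖v‖ ^ 2 * density u z) := by
    refine integrable_mul_density hu continuous_const (‖v‖ ^ 2) fun z => ?_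
    rw [abs_of_nonneg (by positivity)]
    nlinarith [norm_nonneg z, mul_nonneg (sq_nonneg ‖v‖) (norm_nonneg z),
      mul_nonneg (sq_nonneg ‖v‖) (sq_nonneg ‖z‖)]
  have i1 : Integrable (fun z => inner ℝ z v * density u z) := by
    refine integrable_mul_density hu hc ‖v‖ fun z => (abs_inner_le z v).trans ?_
    gcongr
    nlinarith [norm_nonneg z]
  have i2 : Integrable (fun z => (inner ℝ z v) ^ 2 * density u z) := by
    refine integrable_mul_density hu (hc.pow 2) (‖v‖ ^ 2) fun z => ?_
    rw [abs_pow, ← mul_pow]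
    gcongr
    exact abs_inner_le z v
  have key := integral_bilinear_hasFDerivAt_right_eq_neg_left_of_integrable
    (μ := (volume : Measure (EuclideanSpace ℝ (Fin d)))) (v := v)
    (B := ContinuousLinearMap.mul ℝ ℝ)
    (f := fun z => inner ℝ z v) (f' := fun _ => innerSL ℝ v)
    (g := density u) (g' := fun z => -(density u z / u ^ 2) • innerSL ℝ z)
    (by simpa using i0)
    (by
      refine (i2.const_mul (-(1 / u ^ 2))).congr (Filter.Eventually.of_forall fun z => ?_)
      simp; ring)
    (by simpa using i1) (fun z _ => hF z) (fun z _ => hasFDerivAt_density u z)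
  have e1 : ∀ z : EuclideanSpace ℝ (Fin d), ContinuousLinearMap.mul ℝ ℝ (inner ℝ z v)
      ((-(density u z / u ^ 2) • innerSL ℝ z) v) =
      -(1 / u ^ 2) * ((inner ℝ z v) ^ 2 * density u z) := by
    intro z; simp; ring
  have e2 : ∀ z : EuclideanSpace ℝ (Fin d), ContinuousLinearMap.mul ℝ ℝ (innerSL ℝ v v)
      (density u z) = ‖v‖ ^ 2 * density u z := by
    intro z; simp
  simp_rw [e1, e2] at key
  rw [integral_const_mul, integral_const_mul, integral_density hu] at key
  field_simp at key
  linarith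

lemma integrable_abs_inner_mul_density {u : ℝ} (hu : 0 < u) (v : EuclideanSpace ℝ (Fin d)) :
    Integrable (fun z => |inner ℝ z v| * density u z) := by
  refine integrable_mul_density hu (by fun_prop) ‖v‖ fun z => ?_
  rw [abs_abs]
  refine (abs_inner_le z v).trans ?_
  gcongr
  nlinarith [norm_nonneg z]

lemma integral_abs_inner_le {u : ℝ} (hu : 0 < u) (v : EuclideanSpace ℝ (Fin d)) :
    ∫ z, |inner ℝ z v| * density u z ≤ u * ‖v‖ := by
  rcases eq_or_ne v 0 with rfl | hv
  · simp
  have hs : 0 < u * ‖v‖ := by positivity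
  have i0 : Integrable (fun z : EuclideanSpace ℝ (Fin d) => density u z) := by
    by_contra h
    have := integral_density (d := d) hu
    rw [integral_undef h] at this
    exact zero_ne_one this
  have i2 : Integrable (fun z => (inner ℝ z v) ^ 2 * density u z) := by
    by_contra h
    have := integral_inner_sq hu v
    rw [integral_undef h] at this
    have : 0 < u ^ 2 * ‖v‖ ^ 2 := by positivity
    linarith
  -- `|t| ≤ t² / (2s) + s / 2` with `s = u ‖v‖`, the standard deviation of `⟪Z, v⟫`.
  calc ∫ z, |inner ℝ z v| * density u z
      ≤ ∫ z, (1 / (2 * (u * ‖v‖)) * ((inner ℝ z v) ^ 2 * density u z) +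
          (u * ‖v‖ / 2) * density u z) := by
        refine integral_mono (integrable_abs_inner_mul_density hu v)
          ((i2.const_mul _).add (i0.const_mul _)) fun z => ?_
        have h : |inner ℝ z v| ≤
            1 / (2 * (u * ‖v‖)) * (inner ℝ z v) ^ 2 + u * ‖v‖ / 2 := by
          rw [← sq_abs (inner ℝ z v)]
          have := sq_nonneg (|inner ℝ z v| - u * ‖v‖)
          generalize |inner ℝ z v| = t at *
          generalize u * ‖v‖ = s at *
          rw [show 1 / (2 * s) * t ^ 2 + s / 2 = (t ^ 2 + s ^ 2) / (2 * s) by field_simp,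
            le_div_iff₀ (by positivity)]
          nlinarith
        calc |inner ℝ z v| * density u z ≤ _ :=
              mul_le_mul_of_nonneg_right h (density_nonneg u z)
          _ = _ := by ring
    _ = u * ‖v‖ := by
        rw [integral_add (i2.const_mul _) (i0.const_mul _), integral_const_mul,
          integral_const_mul, integral_inner_sq hu v, integral_density hu]
        field_simp
        norm_num

/-! ### Differentiation of the smoothed function -/

/-- Moving the center of the Gaussian by at most `1` costs a constant factor and a doubling of the
variance; this gives a dominating function that is uniform over a unit ball of centers. -/
lemma density_sub_le {u : ℝ} {x x₀ w : EuclideanSpace ℝ (Fin d)}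
    (hx : ‖x - x₀‖ ≤ 1) :
    density u (w - x) ≤ (2 * π * u ^ 2) ^ (-(d : ℝ) / 2) *
      (Real.exp (1 / (2 * u ^ 2)) * Real.exp (-(1 / (4 * u ^ 2)) * ‖w - x₀‖ ^ 2)) := by
  unfold density
  rw [← Real.exp_add]
  gcongr
  have ht : ‖w - x₀‖ ≤ ‖w - x‖ + 1 := by
    calc ‖w - x₀‖ = ‖(w - x) + (x - x₀)‖ := by congr 1; abel
      _ ≤ _ := (norm_add_le _ _).trans (by gcongr)
  have h : ‖w - x₀‖ ^ 2 ≤ 2 * ‖w - x‖ ^ 2 + 2 := by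
    nlinarith [norm_nonneg (w - x₀), sq_nonneg (‖w - x‖ - 1)]
  rw [show -‖w - x‖ ^ 2 / (2 * u ^ 2) = -(2 * ‖w - x‖ ^ 2) * (1 / (4 * u ^ 2)) by ring,
    show 1 / (2 * u ^ 2) + -(1 / (4 * u ^ 2)) * ‖w - x₀‖ ^ 2 =
      (2 - ‖w - x₀‖ ^ 2) * (1 / (4 * u ^ 2)) by ring]
  gcongr
  linarith

lemma abs_le_growth {f : EuclideanSpace ℝ (Fin d) → ℝ} {K : ℝ} (hK : 0 ≤ K)
    (hf : ∀ x y, |f x - f y| ≤ K * ‖x - y‖) (x w : EuclideanSpace ℝ (Fin d)) :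
    |f w| ≤ (|f x| + K) * (1 + ‖w - x‖) := by
  have h1 := hf w x
  have h2 : |f w| ≤ |f w - f x| + |f x| := by
    simpa using abs_add_le (f w - f x) (f x)
  nlinarith [abs_nonneg (f x), mul_nonneg (abs_nonneg (f x)) (norm_nonneg (w - x))]

lemma continuous_of_lip {f : EuclideanSpace ℝ (Fin d) → ℝ} {K : ℝ} (hK : 0 ≤ K)
    (hf : ∀ x y, |f x - f y| ≤ K * ‖x - y‖) : Continuous f := by
  refine (LipschitzWith.of_dist_le_mul (K := K.toNNReal) fun x y => ?_).continuous
  rw [Real.dist_eq, dist_eq_norm, Real.coe_toNNReal K hK]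
  exact hf x y

lemma integrable_comp_add_mul_density {u : ℝ} (hu : 0 < u)
    {f : EuclideanSpace ℝ (Fin d) → ℝ} {K : ℝ} (hK : 0 ≤ K)
    (hf : ∀ x y, |f x - f y| ≤ K * ‖x - y‖) (x : EuclideanSpace ℝ (Fin d)) :
    Integrable (fun z => f (x + z) * density u z) := by
  refine integrable_mul_density hu
    ((continuous_of_lip hK hf).comp (by fun_prop)) (|f x| + K) fun z => ?_
  have h := abs_le_growth hK hf x (x + z)
  rw [add_sub_cancel_left] at h
  refine h.trans ?_
  gcongr
  nlinarith [norm_nonneg z]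

lemma integrable_comp_add_mul_inner_mul_density {u : ℝ} (hu : 0 < u)
    {f : EuclideanSpace ℝ (Fin d) → ℝ} {K : ℝ} (hK : 0 ≤ K)
    (hf : ∀ x y, |f x - f y| ≤ K * ‖x - y‖) (x v : EuclideanSpace ℝ (Fin d)) :
    Integrable (fun z => f (x + z) * inner ℝ z v * density u z) := by
  have := continuous_of_lip hK hf
  refine integrable_mul_density hu (by fun_prop) ((|f x| + K) * ‖v‖) fun z => ?_
  have h := abs_le_growth hK hf x (x + z)
  rw [add_sub_cancel_left] at h
  rw [abs_mul]
  calc |f (x + z)| * |inner ℝ z v|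
      ≤ ((|f x| + K) * (1 + ‖z‖)) * (‖v‖ * (1 + ‖z‖)) :=
        mul_le_mul h (abs_inner_le z v) (abs_nonneg _) (by positivity)
    _ = _ := by ring

/-- Differentiation under the integral sign, the derivative falling on the Gaussian kernel. Also
records integrability of the derivative kernel, so that its integral can be evaluated on vectors. -/
lemma hasFDerivAt_smoothing {u : ℝ} (hu : 0 < u)
    {f : EuclideanSpace ℝ (Fin d) → ℝ} {K : ℝ} (hK : 0 ≤ K)
    (hf : ∀ x y, |f x - f y| ≤ K * ‖x - y‖) (x₀ : EuclideanSpace ℝ (Fin d)) :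
    Integrable (fun w => (f w * (density u (w - x₀) / u ^ 2)) • innerSL ℝ (w - x₀)) ∧
    HasFDerivAt (fun x => ∫ z, f (x + z) * density u z)
      (∫ w, (f w * (density u (w - x₀) / u ^ 2)) • innerSL ℝ (w - x₀)) x₀ := by
  have hfc := continuous_of_lip hK hf
  have hG := continuous_density (d := d) u
  have shift : (fun x => ∫ z, f (x + z) * density u z) =
      fun x => ∫ w, f w * density u (w - x) := by
    funext x
    rw [← integral_sub_right_eq_self (fun z => f (x + z) * density u z) x]
    simp
  set c : ℝ := (2 * π * u ^ 2) ^ (-(d : ℝ) / 2) with hc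
  have hc0 : 0 ≤ c := by positivity
  set M : ℝ := (|f x₀| + K) * 2 * (c * Real.exp (1 / (2 * u ^ 2)) / u ^ 2) with hM
  have hbound : ∀ w, ∀ x ∈ Metric.ball x₀ 1,
      ‖(f w * (density u (w - x) / u ^ 2)) • innerSL ℝ (w - x)‖ ≤
        M * ((1 + ‖w - x₀‖) ^ 2 * Real.exp (-(1 / (4 * u ^ 2)) * ‖w - x₀‖ ^ 2)) := by
    intro w x hx
    have hx' : ‖x - x₀‖ ≤ 1 := by
      rw [← dist_eq_norm]; exact (Metric.mem_ball.mp hx).le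
    have h1 := abs_le_growth hK hf x₀ w
    have h2 := density_sub_le (u := u) (w := w) hx'
    have h3 : ‖w - x‖ ≤ 2 * (1 + ‖w - x₀‖) := by
      calc ‖w - x‖ = ‖(w - x₀) - (x - x₀)‖ := by congr 1; abel
        _ ≤ ‖w - x₀‖ + ‖x - x₀‖ := norm_sub_le _ _
        _ ≤ _ := by linarith [norm_nonneg (w - x₀)]
    rw [norm_smul, innerSL_apply_norm, Real.norm_eq_abs, abs_mul,
      abs_of_nonneg (div_nonneg (density_nonneg u (w - x)) (sq_nonneg u))]
    calc |f w| * (density u (w - x) / u ^ 2) * ‖w - x‖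
        ≤ ((|f x₀| + K) * (1 + ‖w - x₀‖)) * ((c * (Real.exp (1 / (2 * u ^ 2)) *
            Real.exp (-(1 / (4 * u ^ 2)) * ‖w - x₀‖ ^ 2))) / u ^ 2) *
            (2 * (1 + ‖w - x₀‖)) := by
          gcongr
          exact div_nonneg (density_nonneg _ _) (sq_nonneg u)
      _ = _ := by rw [hM]; ring
  have hbi : Integrable (fun w : EuclideanSpace ℝ (Fin d) =>
      M * ((1 + ‖w - x₀‖) ^ 2 * Real.exp (-(1 / (4 * u ^ 2)) * ‖w - x₀‖ ^ 2))) :=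
    ((integrable_one_add_sq_mul_exp (b := 1 / (4 * u ^ 2))
      (by positivity)).comp_sub_right x₀).const_mul M
  have hmeas : AEStronglyMeasurable
      (fun w => (f w * (density u (w - x₀) / u ^ 2)) • innerSL ℝ (w - x₀)) volume := by
    apply Continuous.aestronglyMeasurable
    fun_prop
  refine ⟨hbi.mono' hmeas (Filter.Eventually.of_forall fun w =>
    hbound w x₀ (Metric.mem_ball_self one_pos)), ?_⟩
  rw [shift]
  refine hasFDerivAt_integral_of_dominated_of_fderiv_le (𝕜 := ℝ)
    (F := fun x w => f w * density u (w - x))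
    (F' := fun x w => (f w * (density u (w - x) / u ^ 2)) • innerSL ℝ (w - x))
    (Metric.ball_mem_nhds x₀ one_pos)
    (Filter.Eventually.of_forall fun x => ?_) ?_ hmeas
    (Filter.Eventually.of_forall hbound) hbi
    (Filter.Eventually.of_forall fun w x _ => ?_)
  · apply Continuous.aestronglyMeasurable
    fun_prop
  · have := (integrable_comp_add_mul_density hu hK hf x₀).comp_sub_right x₀
    simpa using this
  · have h1 := (hasFDerivAt_density u (w - x)).comp x ((hasFDerivAt_id x).const_sub w)
    refine (h1.const_mul (f w)).congr_fderiv ?_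
    ext v
    simp
    ring

lemma fderiv_smoothing_apply {u : ℝ} (hu : 0 < u)
    {f : EuclideanSpace ℝ (Fin d) → ℝ} {K : ℝ} (hK : 0 ≤ K)
    (hf : ∀ x y, |f x - f y| ≤ K * ‖x - y‖) (x v : EuclideanSpace ℝ (Fin d)) :
    fderiv ℝ (fun x => ∫ z, f (x + z) * density u z) x v =
      1 / u ^ 2 * ∫ z, f (x + z) * inner ℝ z v * density u z := by
  obtain ⟨hi, hd⟩ := hasFDerivAt_smoothing hu hK hf x
  rw [hd.fderiv, ContinuousLinearMap.integral_apply hi, ← integral_const_mul,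
    ← integral_sub_right_eq_self
      (fun z => 1 / u ^ 2 * (f (x + z) * inner ℝ z v * density u z)) x]
  congr 1
  funext w
  simp [inner_sub_left]
  ring

end GaussianSmoothing

/-! ### Lipschitz continuity of the gradient -/

open MeasureTheory Real in
theorem stmt11 (d : ℕ) (f : EuclideanSpace ℝ (Fin d) → ℝ) (L u : ℝ) (hu : 0 < u)
    (hconv : ConvexOn ℝ Set.univ f)
    (hlip : ∀ x y, |f x - f y| ≤ L * ‖x - y‖)
    (γ : Measure (EuclideanSpace ℝ (Fin d)))
    (hγ : γ = volume.withDensity fun z => ENNReal.ofReal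
        ((2 * π * u ^ 2) ^ (-(d : ℝ) / 2) * Real.exp (-‖z‖ ^ 2 / (2 * u ^ 2))))
    (fμ : EuclideanSpace ℝ (Fin d) → ℝ)
    (hfμ : ∀ x, fμ x = ∫ z, f (x + z) ∂γ) :
    Differentiable ℝ fμ ∧
      ∀ x y, ‖fderiv ℝ fμ x - fderiv ℝ fμ y‖ ≤ (L / u) * ‖x - y‖ := by  -- `L` may be negative when `d = 0`, so growth bounds on `f` use `max L 0`.
  have hK : 0 ≤ max L 0 := le_max_right _ _
  have hf : ∀ x y, |f x - f y| ≤ max L 0 * ‖x - y‖ := fun x y =>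
    (hlip x y).trans (by gcongr; exact le_max_left _ _)
  have hfun : fμ = fun x => ∫ z, f (x + z) * GaussianSmoothing.density u z := by
    funext x
    have hm : Measurable fun z : EuclideanSpace ℝ (Fin d) =>
        ENNReal.ofReal (GaussianSmoothing.density u z) :=
      (GaussianSmoothing.continuous_density u).measurable.ennreal_ofReal
    have hγ' : γ = volume.withDensity fun z =>
        ENNReal.ofReal (GaussianSmoothing.density u z) := hγ
    rw [hfμ, hγ', integral_withDensity_eq_integral_toReal_smul hm
      (Filter.Eventually.of_forall fun z => ENNReal.ofReal_lt_top)]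
    congr 1
    funext z
    rw [ENNReal.toReal_ofReal (GaussianSmoothing.density_nonneg u z), smul_eq_mul, mul_comm]
  subst hfun
  refine ⟨fun x => (GaussianSmoothing.hasFDerivAt_smoothing hu hK hf x).2.differentiableAt,
    fun x y => ?_⟩
  have hL : 0 ≤ L * ‖x - y‖ := (abs_nonneg _).trans (hlip x y)
  have hb : 0 ≤ L / u * ‖x - y‖ := by
    rw [div_mul_eq_mul_div]; exact div_nonneg hL hu.le
  refine ContinuousLinearMap.opNorm_le_bound _ hb fun v => ?_
  have ix := GaussianSmoothing.integrable_comp_add_mul_inner_mul_density hu hK hf x v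
  have iy := GaussianSmoothing.integrable_comp_add_mul_inner_mul_density hu hK hf y v
  rw [_root_.sub_apply, GaussianSmoothing.fderiv_smoothing_apply hu hK hf,
    GaussianSmoothing.fderiv_smoothing_apply hu hK hf, ← mul_sub, ← integral_sub ix iy,
    norm_mul, Real.norm_of_nonneg (by positivity)]
  have hmain : ‖∫ z, (f (x + z) * inner ℝ z v * GaussianSmoothing.density u z -
      f (y + z) * inner ℝ z v * GaussianSmoothing.density u z)‖ ≤
      L * ‖x - y‖ * (u * ‖v‖) := by
    calc _ ≤ ∫ z, L * ‖x - y‖ * (|inner ℝ z v| * GaussianSmoothing.density u z) := by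
          refine norm_integral_le_of_norm_le
            ((GaussianSmoothing.integrable_abs_inner_mul_density hu v).const_mul _)
            (Filter.Eventually.of_forall fun z => ?_)
          have h := hlip (x + z) (y + z)
          rw [add_sub_add_right_eq_sub] at h
          rw [← sub_mul, ← sub_mul, mul_assoc, norm_mul, norm_mul, Real.norm_eq_abs,
            Real.norm_eq_abs, Real.norm_of_nonneg (GaussianSmoothing.density_nonneg u z)]
          exact mul_le_mul_of_nonneg_right h
            (mul_nonneg (abs_nonneg _) (GaussianSmoothing.density_nonneg u z))
      _ ≤ _ := by
          rw [integral_const_mul]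
          exact mul_le_mul_of_nonneg_left (GaussianSmoothing.integral_abs_inner_le hu v) hL
  calc _ ≤ 1 / u ^ 2 * (L * ‖x - y‖ * (u * ‖v‖)) := by gcongr
    _ = _ := by field_simp
end

section
/- Let f : ℝ^d → ℝ be convex and L-Lipschitz with respect to the ℓ1-norm, and let f_μ(x) = E[f(x + Z)] where Z is uniform on B_∞(0,u). Then ∇f_μ is (L/u)-Lipschitz from (ℝ^d, ‖·‖₁) to (ℝ^d, ‖·‖∞): ‖∇f_μ(x) − ∇f_μ(y)‖∞ ≤ (L/u)‖x − y‖₁ for all x, y. -/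
/-!
Write `box u x` for the cube of centre `x` and half-side `u`.  Since `f` is Lipschitz, it is
differentiable almost everywhere (Rademacher), and dominated convergence allows differentiation
under the integral sign: `fderiv fμ x = 𝔼[fderiv f (x + Z)]` (`hasFDerivAt_smoothing`).  Each
partial derivative of `f` is bounded by `L`, so a translation of the integration variable bounds
the difference of the `i`-th partial derivatives of `fμ` at `x` and `y` by
`(2u)⁻ᵈ * L * vol (box u x ∆ box u y)`.  A point of `box u x` outside `box u y` violates
the constraint of some coordinate `j`, and the points violating that one lie in a product of
intervals of volume at most `(2u)^(d-1) * |x j - y j|` (`volume_box_diff_le`).  Multiplied by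
`(2u)⁻ᵈ * L`, the two halves of the symmetric difference together give `L / u * ∑ j, |x j - y j|`.
-/

open MeasureTheory

/-- The closed cube of centre `x` and half-side `u`, as a product of intervals. -/
def box {d : ℕ} (u : ℝ) (x : Fin d → ℝ) : Set (Fin d → ℝ) :=
  Set.pi Set.univ fun j => Set.Icc (x j - u) (x j + u)

lemma measurableSet_box {d : ℕ} (u : ℝ) (x : Fin d → ℝ) : MeasurableSet (box u x) :=
  MeasurableSet.univ_pi fun _ => measurableSet_Icc

lemma volume_box {d : ℕ} (u : ℝ) (x : Fin d → ℝ) :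
    volume (box u x) = ENNReal.ofReal (2 * u) ^ d := by
  have h : ∀ j, x j + u - (x j - u) = 2 * u := fun j => by ring
  simp only [box, volume_pi_pi, Real.volume_Icc, h, Finset.prod_const, Finset.card_univ,
    Fintype.card_fin]

lemma volume_Icc_diff_le (u a b : ℝ) :
    volume (Set.Icc (a - u) (a + u) \ Set.Icc (b - u) (b + u)) ≤ ENNReal.ofReal |a - b| := by
  rcases le_total a b with h | h
  · calc _ ≤ volume (Set.Ico (a - u) (b - u)) := by
          apply measure_mono
          rintro t ⟨⟨h1, h2⟩, h3⟩
          refine ⟨h1, ?_⟩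
          by_contra! h4
          exact h3 ⟨h4, by linarith⟩
      _ ≤ _ := by
          rw [Real.volume_Ico, abs_of_nonpos (by linarith)]
          exact ENNReal.ofReal_le_ofReal (by linarith)
  · calc _ ≤ volume (Set.Ioc (b + u) (a + u)) := by
          apply measure_mono
          rintro t ⟨⟨h1, h2⟩, h3⟩
          refine ⟨?_, h2⟩
          by_contra! h4
          exact h3 ⟨by linarith, h4⟩
      _ ≤ _ := by
          rw [Real.volume_Ioc, abs_of_nonneg (by linarith)]
          exact ENNReal.ofReal_le_ofReal (by linarith)

lemma volume_box_diff_le {d : ℕ} (u : ℝ) (x y : Fin d → ℝ) :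
    volume (box u x \ box u y) ≤
      ∑ j, ENNReal.ofReal |x j - y j| * ENNReal.ofReal (2 * u) ^ (d - 1) := by
  classical
  let S : Fin d → Set (Fin d → ℝ) := fun j => Set.pi Set.univ
    (Function.update (fun k => Set.Icc (x k - u) (x k + u)) j
      (Set.Icc (x j - u) (x j + u) \ Set.Icc (y j - u) (y j + u)))
  have hsub : box u x \ box u y ⊆ ⋃ j, S j := by
    rintro w ⟨hx, hy⟩
    simp only [box, Set.mem_univ_pi] at hx hy
    push Not at hy
    obtain ⟨j, hj⟩ := hy
    refine Set.mem_iUnion.2 ⟨j, ?_⟩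
    simp only [S, Set.mem_univ_pi]
    intro k
    by_cases hk : k = j
    · subst hk
      simpa only [Function.update_self] using ⟨hx k, hj⟩
    · simpa only [Function.update_of_ne hk] using hx k
  refine (measure_mono hsub).trans ((measure_iUnion_fintype_le _ _).trans ?_)
  refine Finset.sum_le_sum fun j _ => ?_
  simp only [S, volume_pi_pi]
  rw [← Finset.mul_prod_erase _ _ (Finset.mem_univ j), Function.update_self]
  have h2 : ∏ k ∈ Finset.univ.erase j,
      volume (Function.update (fun k => Set.Icc (x k - u) (x k + u)) j
        (Set.Icc (x j - u) (x j + u) \ Set.Icc (y j - u) (y j + u)) k) =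
      ENNReal.ofReal (2 * u) ^ (d - 1) := by
    rw [Finset.prod_congr rfl (g := fun _ => ENNReal.ofReal (2 * u))]
    · simp
    · intro k hk
      rw [Function.update_of_ne (Finset.ne_of_mem_erase hk), Real.volume_Icc]
      congr 1
      ring
  rw [h2]
  gcongr
  exact volume_Icc_diff_le u _ _

lemma measureReal_box_diff_le {d : ℕ} {u : ℝ} (hu : 0 < u) (x y : Fin d → ℝ) :
    volume.real (box u x \ box u y) ≤ (2 * u) ^ d * ((∑ j, |x j - y j|) / (2 * u)) := by
  have h := ENNReal.toReal_mono (by simp [ENNReal.mul_eq_top]) (volume_box_diff_le u x y)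
  rw [ENNReal.toReal_sum (by simp [ENNReal.mul_eq_top])] at h
  refine h.trans (le_of_eq ?_)
  rw [Finset.sum_div, Finset.mul_sum]
  refine Finset.sum_congr rfl fun j _ => ?_
  obtain ⟨n, rfl⟩ : ∃ n, d = n + 1 := ⟨d - 1, by have := j.2; omega⟩
  simp only [ENNReal.toReal_mul, ENNReal.toReal_pow, ENNReal.toReal_ofReal (abs_nonneg _),
    ENNReal.toReal_ofReal (show 0 ≤ 2 * u by positivity), Nat.add_sub_cancel]
  field_simp
  ring

/-- The integrals over the intersection of the two cubes cancel, so their difference is at most `L`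
times the volume of the symmetric difference. -/
lemma abs_setIntegral_box_sub_le {d : ℕ} {u L : ℝ} (hu : 0 < u) (hL : 0 ≤ L)
    {g : (Fin d → ℝ) → ℝ} (hg : Measurable g) (hb : ∀ w, |g w| ≤ L) (x y : Fin d → ℝ) :
    |(∫ w in box u x, g w) - ∫ w in box u y, g w| ≤
      (2 * u) ^ d * (L / u * ∑ j, |x j - y j|) := by
  have hfin : ∀ x : Fin d → ℝ, volume (box u x) < ⊤ := fun x => by
    rw [volume_box]; exact ENNReal.pow_lt_top ENNReal.ofReal_lt_top
  have hint : ∀ x : Fin d → ℝ, IntegrableOn g (box u x) := fun x =>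
    Measure.integrableOn_of_bounded (M := L) (hfin x).ne hg.aestronglyMeasurable
      (Filter.Eventually.of_forall hb)
  have key : ∀ x y : Fin d → ℝ, |∫ w in box u x \ box u y, g w| ≤
      L * ((2 * u) ^ d * ((∑ j, |x j - y j|) / (2 * u))) := fun x y =>
    (norm_setIntegral_le_of_norm_le_const (f := g)
      ((measure_mono Set.sdiff_subset).trans_lt (hfin x)) fun w _ => hb w).trans
      (mul_le_mul_of_nonneg_left (measureReal_box_diff_le hu x y) hL)
  rw [← integral_inter_add_sdiff (measurableSet_box u y) (hint x),
    ← integral_inter_add_sdiff (measurableSet_box u x) (hint y), Set.inter_comm (box u y),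
    add_sub_add_left_eq_sub]
  have h1 := key x y
  have h2 := key y x
  simp only [abs_sub_comm (y _)] at h2
  refine (abs_sub _ _).trans ((add_le_add h1 h2).trans (le_of_eq ?_))
  field_simp
  ring

lemma setIntegral_box_zero_comp_add {d : ℕ} (u : ℝ) (g : (Fin d → ℝ) → ℝ) (x : Fin d → ℝ) :
    ∫ z in box u 0, g (x + z) = ∫ w in box u x, g w := by
  have hpre : (fun z => x + z) ⁻¹' box u x = box u 0 := by
    ext z
    simp only [box, Set.mem_preimage, Set.mem_univ_pi, Set.mem_Icc, Pi.add_apply, Pi.zero_apply]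
    refine forall_congr' fun j => ?_
    constructor <;> rintro ⟨h1, h2⟩ <;> constructor <;> linarith
  rw [← hpre]
  exact (measurePreserving_add_left volume x).setIntegral_preimage_emb
    (measurableEmbedding_addLeft x) g _

/-- Differentiation under the integral sign for an average of translates of a Lipschitz function,
which is differentiable almost everywhere by Rademacher's theorem. -/
lemma hasFDerivAt_smoothing {d : ℕ} {f : (Fin d → ℝ) → ℝ} {C : NNReal} (hf : LipschitzWith C f)
    {μ : Measure (Fin d → ℝ)} [IsFiniteMeasure μ] (hμ : μ ≪ volume)
    (hfi : ∀ x, Integrable (fun z => f (x + z)) μ) (x : Fin d → ℝ) :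
    Integrable (fun z => fderiv ℝ f (x + z)) μ ∧
      HasFDerivAt (fun x => ∫ z, f (x + z) ∂μ) (∫ z, fderiv ℝ f (x + z) ∂μ) x := by
  have hae : ∀ᵐ z ∂μ, DifferentiableAt ℝ f (x + z) := hμ.ae_le <|
    (measurePreserving_add_left volume x).quasiMeasurePreserving.ae hf.ae_differentiableAt
  refine hasFDerivAt_integral_of_dominated_loc_of_lip (bound := fun _ => (C : ℝ))
    (s := Set.univ) Filter.univ_mem
    (Filter.Eventually.of_forall fun x => (hfi x).aestronglyMeasurable) (hfi x) ?_ ?_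
    (integrable_const _) ?_
  · exact ((measurable_fderiv ℝ f).comp (measurable_const_add x)).aestronglyMeasurable
  · refine Filter.Eventually.of_forall fun z => LipschitzWith.lipschitzOnWith ?_
    refine LipschitzWith.of_dist_le_mul fun a b => ?_
    simpa using hf.dist_le_mul (a + z) (b + z)
  · filter_upwards [hae] with z hz
    exact (hasFDerivAt_comp_add_right z).2 hz.hasFDerivAt

lemma abs_fderiv_single_le {d : ℕ} {f : (Fin d → ℝ) → ℝ} {L : ℝ} (hL : 0 ≤ L)
    (hlip : ∀ x y, |f x - f y| ≤ L * ∑ i, |x i - y i|) (i : Fin d) (w : Fin d → ℝ) :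
    |fderiv ℝ f w (Pi.single i 1)| ≤ L := by
  by_cases hd : DifferentiableAt ℝ f w
  · rw [← hd.lineDeriv_eq_fderiv, lineDeriv]
    refine norm_deriv_le_of_lipschitz (C := ⟨L, hL⟩)
      (f := fun t : ℝ => f (w + t • Pi.single i 1))
      (LipschitzWith.of_dist_le_mul fun s t => ?_)
    refine (hlip _ _).trans (le_of_eq ?_)
    have : ∀ j, |(w + s • (Pi.single i 1 : Fin d → ℝ)) j - (w + t • (Pi.single i 1 : Fin d → ℝ)) j|
        = if j = i then |s - t| else 0 := fun j => by
      by_cases h : j = i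
      · subst h; simp
      · simp [h]
    simp only [this, Finset.sum_ite_eq', Finset.mem_univ, if_true, Real.dist_eq]
    rfl
  -- `fderiv` is zero where `f` is not differentiable.
  · simpa [fderiv_zero_of_not_differentiableAt hd] using hL

open MeasureTheory in
theorem stmt12 (d : ℕ) (f : (Fin d → ℝ) → ℝ) (L u : ℝ) (hu : 0 < u)
    (hconv : ConvexOn ℝ Set.univ f)
    (hlip : ∀ x y, |f x - f y| ≤ L * ∑ i, |x i - y i|)
    (μ : Measure (Fin d → ℝ))
    (hμ : μ = (volume {z : Fin d → ℝ | ∀ i, |z i| ≤ u})⁻¹ •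
      volume.restrict {z | ∀ i, |z i| ≤ u})
    (fμ : (Fin d → ℝ) → ℝ) (hfμ : ∀ x, fμ x = ∫ z, f (x + z) ∂μ) :
    Differentiable ℝ fμ ∧
      ∀ x y i, |fderiv ℝ fμ x (Pi.single i 1) - fderiv ℝ fμ y (Pi.single i 1)|
        ≤ (L / u) * ∑ j, |x j - y j| := by
  have hbox : {z : Fin d → ℝ | ∀ i, |z i| ≤ u} = box u 0 := by
    ext z
    simp only [box, Set.mem_ofPred_eq, Set.mem_univ_pi, Set.mem_Icc, abs_le, Pi.zero_apply,
      zero_sub, zero_add]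
  rw [hbox, volume_box] at hμ
  set c : ENNReal := (ENNReal.ofReal (2 * u) ^ d)⁻¹ with hc
  have hpos : 0 < (2 * u) ^ d := by positivity
  have hctop : c ≠ ⊤ := by
    rw [hc]; exact ENNReal.inv_ne_top.2 (pow_ne_zero _ (by simpa using hu))
  have hcreal : c.toReal = ((2 * u) ^ d)⁻¹ := by
    rw [hc, ENNReal.toReal_inv, ENNReal.toReal_pow, ENNReal.toReal_ofReal (by positivity)]
  -- In the sup norm `f` is Lipschitz with constant `|L| * d`; for `d = 0`, `L` may be negative.
  have hf : LipschitzWith (⟨|L| * d, by positivity⟩ : NNReal) f := by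
    refine LipschitzWith.of_dist_le_mul fun x y => (hlip x y).trans ?_
    have h1 : ∑ i, |x i - y i| ≤ d * dist x y := by
      refine (Finset.sum_le_sum fun i _ => dist_le_pi_dist x y i).trans (le_of_eq (by simp))
    calc L * ∑ i, |x i - y i| ≤ |L| * (d * dist x y) :=
          mul_le_mul (le_abs_self L) h1 (by positivity) (by positivity)
      _ = _ := by rw [← mul_assoc]; rfl
  have hcomp : IsCompact (box u (0 : Fin d → ℝ)) := isCompact_univ_pi fun _ => isCompact_Icc
  have hfinite : IsFiniteMeasure μ := by
    have : IsFiniteMeasure (volume.restrict (box u (0 : Fin d → ℝ))) :=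
      isFiniteMeasure_restrict.2 hcomp.measure_lt_top.ne
    rw [hμ]
    exact Measure.smul_finite _ hctop
  have hac : μ ≪ volume := by
    rw [hμ]
    exact Measure.absolutelyContinuous_of_le_smul
      (c := c) (by gcongr; exact Measure.restrict_le_self)
  have hfi : ∀ x, Integrable (fun z => f (x + z)) μ := fun x => by
    rw [hμ]
    refine Integrable.smul_measure ?_ hctop
    exact (hf.continuous.comp (continuous_const_add x)).continuousOn.integrableOn_compact hcomp
  have hder := fun x => hasFDerivAt_smoothing hf hac hfi x
  obtain rfl : fμ = fun x => ∫ z, f (x + z) ∂μ := funext hfμ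
  refine ⟨fun x => (hder x).2.differentiableAt, fun x y i => ?_⟩
  have hL : 0 ≤ L := by
    have h := (abs_nonneg _).trans (hlip (Pi.single i 1) 0)
    have hs : ∑ j, |(Pi.single i 1 : Fin d → ℝ) j - (0 : Fin d → ℝ) j| = 1 := by
      rw [Finset.sum_eq_single i] <;> simp +contextual
    rwa [hs, mul_one] at h
  have hval : ∀ x, fderiv ℝ (fun x => ∫ z, f (x + z) ∂μ) x (Pi.single i 1) =
      ((2 * u) ^ d)⁻¹ * ∫ w in box u x, fderiv ℝ f w (Pi.single i 1) := fun x => by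
    rw [(hder x).2.fderiv, ContinuousLinearMap.integral_apply (hder x).1, hμ,
      integral_smul_measure, hcreal, smul_eq_mul,
      setIntegral_box_zero_comp_add u (fun w => fderiv ℝ f w (Pi.single i 1))]
  rw [hval, hval, ← mul_sub, abs_mul, abs_of_pos (inv_pos.2 hpos), inv_mul_le_iff₀ hpos]
  exact abs_setIntegral_box_sub_le hu hL (measurable_fderiv_apply_const ℝ f _)
    (abs_fderiv_single_le hL hlip i) x y
end
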